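/- arXiv:1911.05136 — 2 statements merged into one kernel-verified Lean document; each statement's English description precedes it below -/
import Mathlib

section
/- Let A ∈ ℂ^{m×m}, ε ∈ ℝ, z₀ ∈ ℂ, and θ ∈ ℝ. Then 0 is an eigenvalue of the matrix pencil (C, D_θ), i.e., det(C) = 0, if and only if ε² is an eigenvalue of the matrix (A − z₀I)(A − z₀I)*. -/
open Complex Matrix MeasureTheory Set Polynomial Topology

noncomputable section

open scoped Classical

/-- `s` is a singular value of the square complex matrix `M`:
`s ≥ 0` and `s²` is an eigenvalue of `M Mᴴ`. -/
def IsSingularValue {k : ℕ} (M : Matrix (Fin k) (Fin k) ℂ) (s : ℝ) : Prop :=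
  0 ≤ s ∧ (M * Mᴴ - ((s : ℂ) ^ 2) • 1).det = 0

/-- The smallest singular value of `M`. -/
def sigmaMin {k : ℕ} (M : Matrix (Fin k) (Fin k) ℂ) : ℝ :=
  sInf {s : ℝ | IsSingularValue M s}

/-- The `ε`-pseudospectrum of `M`. -/
def pspec {k : ℕ} (ε : ℝ) (M : Matrix (Fin k) (Fin k) ℂ) : Set ℂ :=
  {z : ℂ | sigmaMin (M - z • 1) ≤ ε}

/-- The ray emanating from `z₀` in direction `θ`. -/
def ray (z₀ : ℂ) (θ : ℝ) : Set ℂ :=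
  {z : ℂ | ∃ r : ℝ, 0 < r ∧ z = z₀ + (r : ℂ) * Complex.exp ((θ : ℂ) * Complex.I)}

/-- The matrix `C` of the pencil `(C, D_θ)` associated with `A`, `ε`, `z₀`. -/
def pencilC {m : ℕ} (A : Matrix (Fin m) (Fin m) ℂ) (ε : ℝ) (z₀ : ℂ) :
    Matrix (Fin m ⊕ Fin m) (Fin m ⊕ Fin m) ℂ :=
  Matrix.fromBlocks (A - z₀ • 1) ((-(ε : ℂ)) • 1) ((ε : ℂ) • 1) (-(A - z₀ • 1)ᴴ)

/-- The matrix `D_θ` of the pencil `(C, D_θ)`. -/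
def pencilD (m : ℕ) (θ : ℝ) : Matrix (Fin m ⊕ Fin m) (Fin m ⊕ Fin m) ℂ :=
  Matrix.fromBlocks ((-(Complex.I * Complex.exp ((θ : ℂ) * Complex.I))) • 1) 0 0
    ((Complex.I * Complex.exp (-((θ : ℂ) * Complex.I))) • 1)

/-- The spectrum of a matrix pencil `(C, D)`: all `λ` with `det (C - λ D) = 0`. -/
def pencilSpec {k : Type} [Fintype k] [DecidableEq k] (C D : Matrix k k ℂ) : Set ℂ :=
  {lam : ℂ | (C - lam • D).det = 0}

/-- The function `a_ε(θ) = min {(Arg (-iλ))² : λ ∈ Λ(C, D_θ), Re λ ≤ 0}`. -/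
def aFun {m : ℕ} (A : Matrix (Fin m) (Fin m) ℂ) (ε : ℝ) (z₀ : ℂ) (θ : ℝ) : ℝ :=
  sInf {x : ℝ | ∃ lam ∈ pencilSpec (pencilC A ε z₀) (pencilD m θ),
    lam.re ≤ 0 ∧ x = (Complex.arg (-Complex.I * lam)) ^ 2}


/-
By Silvester's theorem, a block matrix whose lower blocks commute satisfies
`det [[A, B], [C, D]] = det (A D - B C)`. With `M = A - z₀ I`, the lower left block `ε I` of the
pencil matrix is scalar, so its determinant is `det (-(M Mᴴ) + ε² I)`, which is
`det (M Mᴴ - ε² I)` up to sign.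
-/

section BlockDeterminants

variable {R n : Type*} [CommRing R] [Fintype n] [DecidableEq n]

theorem det_fromBlocks_of_commute_of_isRegular {A B C D : Matrix n n R} (hCD : Commute C D)
    (hD : IsRegular D.det) : (fromBlocks A B C D).det = (A * D - B * C).det := by
  have elimination :
      fromBlocks A B C D * fromBlocks D 0 (-C) 1 = fromBlocks (A * D - B * C) B 0 D := by
    simp [fromBlocks_multiply, hCD.eq, sub_eq_add_neg]
  apply hD.right
  calc (fromBlocks A B C D).det * D.det
      = (fromBlocks A B C D * fromBlocks D 0 (-C) 1).det := by simp
    _ = (A * D - B * C).det * D.det := by rw [elimination, det_fromBlocks_zero₂₁]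

theorem det_fromBlocks_of_commute {A B C D : Matrix n n R} (hCD : Commute C D) :
    (fromBlocks A B C D).det = (A * D - B * C).det := by
  -- Over `R[X]`, the perturbation `X • 1 + D` of `D` has regular determinant and still commutes
  -- with `C`; evaluating at `X = 0` recovers the claim.
  let ι : Matrix n n R →+* Matrix n n R[X] := Polynomial.C.mapMatrix
  let ev : R[X] →+* R := evalRingHom 0
  let D' : Matrix n n R[X] := (X : R[X]) • 1 + ι D
  have ev_ι (M : Matrix n n R) : (ι M).map ev = M := by ext; simp [ι, ev]
  have ev_D' : D'.map ev = D := by ext; simp [D', ι, ev]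
  have commute_D' : Commute (ι C) D' :=
    ((Commute.one_right _).smul_right X).add_right (hCD.map ι)
  have det_eq : (fromBlocks (ι A) (ι B) (ι C) D').det = (ι A * D' - ι B * ι C).det :=
    det_fromBlocks_of_commute_of_isRegular commute_D'
      (Monic.isRegular (leadingCoeff_det_X_one_add_C D))
  simpa only [RingHom.map_det, RingHom.mapMatrix_apply, fromBlocks_map,
    Matrix.map_sub ev (map_sub ev), Matrix.map_mul, ev_ι, ev_D'] using congrArg ev det_eq

theorem det_fromBlocks_neg_smul_one_smul_one_neg (M N : Matrix n n R) (e : R) :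
    (fromBlocks M ((-e) • 1) (e • 1) (-N)).det =
      (-1) ^ Fintype.card n * (M * N - (e ^ 2) • 1).det := by
  have hcomm : Commute (e • (1 : Matrix n n R)) (-N) := (Commute.one_left _).smul_left e
  rw [det_fromBlocks_of_commute hcomm, ← det_neg]
  congr 1
  simp [smul_smul, pow_two, add_comm, sub_eq_add_neg]

theorem stmt2_general (M N : Matrix n n R) (e : R) :
    (fromBlocks M ((-e) • 1) (e • 1) (-N)).det = 0 ↔ (M * N - (e ^ 2) • 1).det = 0 := by
  rw [det_fromBlocks_neg_smul_one_smul_one_neg, (isUnit_one.neg.pow _).mul_right_eq_zero]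

end BlockDeterminants

theorem zero_mem_pencilSpec {k : Type} [Fintype k] [DecidableEq k] {C D : Matrix k k ℂ} :
    (0 : ℂ) ∈ pencilSpec C D ↔ C.det = 0 := by
  simp [pencilSpec]

theorem stmt2 {m : ℕ} (A : Matrix (Fin m) (Fin m) ℂ) (ε : ℝ) (z₀ : ℂ) (θ : ℝ) :
    (0 : ℂ) ∈ pencilSpec (pencilC A ε z₀) (pencilD m θ) ↔
      ((A - z₀ • 1) * (A - z₀ • 1)ᴴ - ((ε : ℂ) ^ 2) • 1).det = 0 :=
  zero_mem_pencilSpec.trans (stmt2_general _ _ _)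
end
end

section
/- Let A ∈ ℂ^{m×m}, B ∈ ℂ^{n×n}, ε ≥ 0, and z₀ ∈ ℂ be such that ε is not a singular value of either A − z₀I or B − z₀I, and let θ ∈ (−π, π]. Then: (i) if R_{z₀}(θ) ∩ Λ_ε(A) ∩ Λ_ε(B) ≠ ∅, then a_ε(θ) + b_ε(θ) = 0; and (ii) if a_ε(θ) + b_ε(θ) = 0, then R_{z₀}(θ) ∩ Λ_ε(A) ≠ ∅ and R_{z₀}(θ) ∩ Λ_ε(B) ≠ ∅. -/
open Complex Matrix MeasureTheory Set Polynomial Topology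

noncomputable section

open scoped Classical

/-!
The smallest singular value `σ_min` of `A - z` is the largest `c` with `c ‖v‖ ≤ ‖(A - z)ᴴ v‖` for
all `v`, so it is 1-Lipschitz in the matrix and tends to infinity with `z`. If the ray meets the
pseudospectrum, the intermediate value theorem, applied from that point outwards, makes `ε` a
singular value of `A - z` for some `z = z₀ + r e^{iθ}` with `r > 0`.

Eliminating one block shows that `i r`, for `r` real, is an eigenvalue of the pencil exactly when
`ε` is a singular value of `A - (z₀ + r e^{iθ})`. The pencil spectrum is finite, and nonempty when
`m > 0`; it is invariant under `λ ↦ -conj λ`, so it meets the half-plane `Re λ ≤ 0` and the minimum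
`a_ε(θ)` is attained. It vanishes iff some eigenvalue is `i r` with `r ≥ 0`, and `r = 0` is excluded
because `ε` is not a singular value of `A - z₀`.
-/

lemma tendsto_add_smul_cobounded {E : Type*} [NormedAddCommGroup E] [NormedSpace ℝ E] (x : E)
    {w : E} (hw : w ≠ 0) :
    Filter.Tendsto (fun r : ℝ ↦ x + r • w) Filter.atTop (Bornology.cobounded E) := by
  refine tendsto_norm_atTop_iff_cobounded.1 (Filter.tendsto_atTop_mono (fun r ↦ ?_)
    (Filter.tendsto_atTop_add_const_right _ (-‖x‖)
      (Filter.tendsto_id.atTop_mul_const (norm_pos_iff.2 hw))))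
  calc r * ‖w‖ + -‖x‖ ≤ ‖r • w‖ - ‖-x‖ := by
        rw [norm_smul, norm_neg, ← sub_eq_add_neg]
        gcongr
        exact Real.le_norm_self r
    _ ≤ ‖r • w - -x‖ := norm_sub_norm_le _ _
    _ = ‖x + r • w‖ := by rw [sub_neg_eq_add, add_comm]

section LinearMap

variable {𝕜 E F : Type*} [RCLike 𝕜]
  [NormedAddCommGroup E] [InnerProductSpace 𝕜 E] [FiniteDimensional 𝕜 E]
  [NormedAddCommGroup F] [InnerProductSpace 𝕜 F] [FiniteDimensional 𝕜 F]

lemma re_inner_adjoint_comp_self (T : E →ₗ[𝕜] F) (v : E) :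
    RCLike.re (inner 𝕜 ((T.adjoint ∘ₗ T) v) v) = ‖T v‖ ^ 2 := by
  rw [LinearMap.comp_apply, LinearMap.adjoint_inner_left, inner_self_eq_norm_sq]

lemma exists_norm_apply_eq_of_hasEigenvalue_adjoint_comp_self {T : E →ₗ[𝕜] F} {s : ℝ}
    (hs : 0 ≤ s) (h : Module.End.HasEigenvalue (T.adjoint ∘ₗ T) ((s : 𝕜) ^ 2)) :
    ∃ v ≠ 0, ‖T v‖ = s * ‖v‖ := by
  obtain ⟨v, hv⟩ := h.exists_hasEigenvector
  refine ⟨v, hv.2, ?_⟩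
  rw [← sq_eq_sq₀ (norm_nonneg _) (by positivity), ← re_inner_adjoint_comp_self, hv.apply_eq_smul,
    inner_smul_left, map_pow, RCLike.conj_ofReal, ← RCLike.ofReal_pow, RCLike.re_ofReal_mul,
    inner_self_eq_norm_sq, mul_pow]

lemma exists_hasEigenvalue_adjoint_comp_self_forall_mul_norm_le [Nontrivial E] (T : E →ₗ[𝕜] F) :
    ∃ s : ℝ, 0 ≤ s ∧ Module.End.HasEigenvalue (T.adjoint ∘ₗ T) ((s : 𝕜) ^ 2) ∧
      ∀ v, s * ‖v‖ ≤ ‖T v‖ := by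
  let q : {v : E // v ≠ 0} → ℝ := fun v ↦ RCLike.re (inner 𝕜 ((T.adjoint ∘ₗ T) v) v) / ‖(v : E)‖ ^ 2
  have hq_nonneg : ∀ v, 0 ≤ q v := fun v ↦ by
    simp only [q, re_inner_adjoint_comp_self]
    positivity
  have hsq : √(⨅ v, q v) ^ 2 = ⨅ v, q v := Real.sq_sqrt (Real.iInf_nonneg hq_nonneg)
  refine ⟨√(⨅ v, q v), Real.sqrt_nonneg _, ?_, fun v ↦ ?_⟩
  · rw [← RCLike.ofReal_pow, hsq]
    exact T.isSymmetric_adjoint_comp_self.hasEigenvalue_iInf_of_finiteDimensional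
  · rcases eq_or_ne v 0 with rfl | hv
    · simp
    have hle : ⨅ v, q v ≤ ‖T v‖ ^ 2 / ‖v‖ ^ 2 := by
      rw [← re_inner_adjoint_comp_self]
      exact ciInf_le ⟨0, Set.forall_mem_range.2 hq_nonneg⟩ ⟨v, hv⟩
    rw [← sq_le_sq₀ (by positivity) (norm_nonneg _), mul_pow, hsq]
    exact (le_div_iff₀ (by positivity)).1 hle

end LinearMap

section SingularValue

open scoped Matrix.Norms.L2Operator

variable {k : ℕ} {M : Matrix (Fin k) (Fin k) ℂ} {s : ℝ}

-- The definition uses `M Mᴴ`, which is `T† T` for the operator `T` of `Mᴴ`.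
lemma isSingularValue_iff_hasEigenvalue :
    IsSingularValue M s ↔ 0 ≤ s ∧ Module.End.HasEigenvalue
      ((toEuclideanLin Mᴴ).adjoint ∘ₗ toEuclideanLin Mᴴ) ((s : ℂ) ^ 2) := by
  rw [← toEuclideanLin_conjTranspose_eq_adjoint, conjTranspose_conjTranspose, ← toLpLin_mul,
    Module.End.hasEigenvalue_iff_mem_spectrum, spectrum_toLpLin, spectrum.mem_iff,
    Algebra.algebraMap_eq_smul_one, ← IsUnit.neg_iff, neg_sub, isUnit_iff_isUnit_det,
    isUnit_iff_ne_zero, not_not, IsSingularValue]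

lemma IsSingularValue.exists_norm_eq (h : IsSingularValue M s) :
    ∃ v ≠ 0, ‖toEuclideanLin Mᴴ v‖ = s * ‖v‖ :=
  exists_norm_apply_eq_of_hasEigenvalue_adjoint_comp_self h.1
    (isSingularValue_iff_hasEigenvalue.1 h).2

lemma sigmaMin_le_of_isSingularValue (h : IsSingularValue M s) : sigmaMin M ≤ s :=
  csInf_le ⟨0, fun _ ht ↦ ht.1⟩ h

lemma sigmaMin_of_dim_zero (M : Matrix (Fin 0) (Fin 0) ℂ) : sigmaMin M = 0 := by
  simp [sigmaMin, IsSingularValue]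

section NeZero

variable [NeZero k]

lemma exists_isSingularValue_forall_mul_norm_le (M : Matrix (Fin k) (Fin k) ℂ) :
    ∃ s, IsSingularValue M s ∧ ∀ v, s * ‖v‖ ≤ ‖toEuclideanLin Mᴴ v‖ := by
  obtain ⟨s, hs, heig, hle⟩ :=
    exists_hasEigenvalue_adjoint_comp_self_forall_mul_norm_le (toEuclideanLin Mᴴ)
  exact ⟨s, isSingularValue_iff_hasEigenvalue.2 ⟨hs, heig⟩, hle⟩

lemma le_sigmaMin (h : ∀ v, s * ‖v‖ ≤ ‖toEuclideanLin Mᴴ v‖) : s ≤ sigmaMin M := by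
  obtain ⟨t₀, ht₀, -⟩ := exists_isSingularValue_forall_mul_norm_le M
  refine le_csInf ⟨t₀, ht₀⟩ fun t ht ↦ ?_
  obtain ⟨v, hv, hvt⟩ := IsSingularValue.exists_norm_eq ht
  exact le_of_mul_le_mul_right ((h v).trans_eq hvt) (norm_pos_iff.2 hv)

lemma isSingularValue_sigmaMin (M : Matrix (Fin k) (Fin k) ℂ) :
    IsSingularValue M (sigmaMin M) := by
  obtain ⟨s, hs, hle⟩ := exists_isSingularValue_forall_mul_norm_le M
  rwa [(sigmaMin_le_of_isSingularValue hs).antisymm (le_sigmaMin hle)]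

lemma sigmaMin_mul_norm_le (M : Matrix (Fin k) (Fin k) ℂ) (v : EuclideanSpace ℂ (Fin k)) :
    sigmaMin M * ‖v‖ ≤ ‖toEuclideanLin Mᴴ v‖ := by
  obtain ⟨s, hs, hle⟩ := exists_isSingularValue_forall_mul_norm_le M
  grw [sigmaMin_le_of_isSingularValue hs, hle v]

lemma sigmaMin_le_add_norm_sub (M N : Matrix (Fin k) (Fin k) ℂ) :
    sigmaMin M ≤ sigmaMin N + ‖M - N‖ := by
  suffices sigmaMin M - ‖M - N‖ ≤ sigmaMin N by linarith
  refine le_sigmaMin fun v ↦ ?_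
  have hsub : ‖toEuclideanLin (M - N)ᴴ v‖ ≤ ‖M - N‖ * ‖v‖ := by
    rw [← l2_opNorm_conjTranspose]
    exact l2_opNorm_mulVec _ v
  calc (sigmaMin M - ‖M - N‖) * ‖v‖ = sigmaMin M * ‖v‖ - ‖M - N‖ * ‖v‖ := sub_mul _ _ _
    _ ≤ ‖toEuclideanLin Mᴴ v‖ - ‖toEuclideanLin (M - N)ᴴ v‖ :=
      sub_le_sub (sigmaMin_mul_norm_le M v) hsub
    _ ≤ ‖toEuclideanLin Mᴴ v - toEuclideanLin (M - N)ᴴ v‖ := norm_sub_norm_le _ _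
    _ = ‖toEuclideanLin Nᴴ v‖ := by
      rw [← LinearMap.sub_apply, ← map_sub, ← conjTranspose_sub, sub_sub_cancel]

lemma continuous_sigmaMin : Continuous (sigmaMin : Matrix (Fin k) (Fin k) ℂ → ℝ) := by
  refine (LipschitzWith.of_le_add fun M N ↦ ?_).continuous
  rw [dist_eq_norm]
  exact sigmaMin_le_add_norm_sub M N

lemma norm_le_sigmaMin_smul_one (z : ℂ) :
    ‖z‖ ≤ sigmaMin (z • 1 : Matrix (Fin k) (Fin k) ℂ) :=
  le_sigmaMin fun v ↦ by simp [norm_smul]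

lemma norm_sub_norm_le_sigmaMin_sub_smul_one (A : Matrix (Fin k) (Fin k) ℂ) (z : ℂ) :
    ‖z‖ - ‖A‖ ≤ sigmaMin (A - z • 1) := by
  have hA : (-z) • 1 - (A - z • 1) = -A := by
    rw [neg_smul]
    abel
  have hle := sigmaMin_le_add_norm_sub ((-z) • 1) (A - z • 1)
  rw [hA, norm_neg] at hle
  have hz := norm_le_sigmaMin_smul_one (k := k) (-z)
  rw [norm_neg] at hz
  linarith

lemma tendsto_sigmaMin_sub_smul_one_cobounded (A : Matrix (Fin k) (Fin k) ℂ) :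
    Filter.Tendsto (fun z : ℂ ↦ sigmaMin (A - z • 1)) (Bornology.cobounded ℂ) Filter.atTop :=
  Filter.tendsto_atTop_mono (norm_sub_norm_le_sigmaMin_sub_smul_one A)
    (Filter.tendsto_atTop_add_const_right _ (-‖A‖) tendsto_norm_cobounded_atTop)

lemma exists_isSingularValue_of_sigmaMin_le (A : Matrix (Fin k) (Fin k) ℂ) {ε : ℝ} (z₀ : ℂ) {w : ℂ}
    (hw : w ≠ 0) {r₀ : ℝ} (h : sigmaMin (A - (z₀ + r₀ * w) • 1) ≤ ε) :
    ∃ r ≥ r₀, IsSingularValue (A - (z₀ + r * w) • 1) ε := by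
  have hcont : Continuous fun r : ℝ ↦ sigmaMin (A - (z₀ + r * w) • 1) :=
    continuous_sigmaMin.comp (by fun_prop)
  obtain ⟨r, hr, rfl⟩ := intermediate_value_Ici hcont.continuousOn
    ((tendsto_sigmaMin_sub_smul_one_cobounded A).comp (tendsto_add_smul_cobounded z₀ hw)) h
  exact ⟨r, hr, isSingularValue_sigmaMin _⟩

end NeZero

end SingularValue

section Pencil

lemma det_fromBlocks_smul_one_eq_zero_iff {K ι : Type*} [Field K] [Fintype ι] [DecidableEq ι]
    (X Y : Matrix ι ι K) (t : K) :
    (fromBlocks X ((-t) • 1) (t • 1) (-Y)).det = 0 ↔ (X * Y - t ^ 2 • 1).det = 0 := by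
  rcases eq_or_ne t 0 with rfl | ht
  · simp [det_neg]
  let P : Matrix (ι ⊕ ι) (ι ⊕ ι) K := fromBlocks Y 1 (t • 1) 0
  have hP : P.det ≠ 0 := by
    have hinv : P * fromBlocks 0 (t⁻¹ • 1) 1 (-t⁻¹ • Y) = 1 := by
      simp [P, fromBlocks_multiply, ht]
    exact (isUnit_det_of_right_inverse hinv).ne_zero
  have hmul : fromBlocks X ((-t) • 1) (t • 1) (-Y) * P =
      fromBlocks (X * Y - t ^ 2 • 1) X 0 (t • 1) := by
    simp [P, fromBlocks_multiply, smul_smul, sq, sub_eq_add_neg]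
  have hdet := congrArg det hmul
  rw [det_mul, det_fromBlocks_zero₂₁] at hdet
  rw [← mul_eq_zero_iff_right hP, hdet, mul_eq_zero_iff_right (by simp [ht])]

lemma pencilSpec_eq_spectrum {k : Type} [Fintype k] [DecidableEq k] {C D : Matrix k k ℂ}
    (hD : IsUnit D.det) : pencilSpec C D = spectrum ℂ (D⁻¹ * C) := by
  ext lam
  have hfactor : D * (algebraMap ℂ _ lam - D⁻¹ * C) = -(C - lam • D) := by
    rw [Algebra.algebraMap_eq_smul_one, mul_sub, mul_nonsing_inv_cancel_left _ _ hD, mul_smul_comm,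
      mul_one, neg_sub]
  have hunit : IsUnit (algebraMap ℂ _ lam - D⁻¹ * C) ↔ IsUnit (C - lam • D) := by
    rw [← IsUnit.neg_iff (C - lam • D), ← hfactor, isUnit_iff_isUnit_det,
      isUnit_iff_isUnit_det (D * _), det_mul, IsUnit.mul_iff, and_iff_right hD]
  rw [spectrum.mem_iff, hunit, isUnit_iff_isUnit_det, isUnit_iff_ne_zero, not_not, pencilSpec,
    Set.mem_ofPred_eq]

lemma isUnit_det_pencilD (m : ℕ) (θ : ℝ) : IsUnit (pencilD m θ).det := by
  simp [pencilD, det_neg]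

variable {m : ℕ} {A : Matrix (Fin m) (Fin m) ℂ} {ε : ℝ} {z₀ lam : ℂ} {θ : ℝ}

lemma mem_pencilSpec_iff_det :
    lam ∈ pencilSpec (pencilC A ε z₀) (pencilD m θ) ↔
      (((A - z₀ • 1) - (-(I * lam) * exp (θ * I)) • 1) *
        ((A - z₀ • 1)ᴴ - (-(I * lam) * exp (-(θ * I))) • 1) - (ε : ℂ) ^ 2 • 1).det = 0 := by
  have hblocks : pencilC A ε z₀ - lam • pencilD m θ =
      fromBlocks ((A - z₀ • 1) - (-(I * lam) * exp (θ * I)) • 1) ((-(ε : ℂ)) • 1) ((ε : ℂ) • 1)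
        (-((A - z₀ • 1)ᴴ - (-(I * lam) * exp (-(θ * I))) • 1)) := by
    rw [pencilC, pencilD, fromBlocks_smul, sub_eq_add_neg, fromBlocks_neg, fromBlocks_add]
    congr 1 <;> module
  rw [← det_fromBlocks_smul_one_eq_zero_iff, ← hblocks, pencilSpec, Set.mem_ofPred_eq]

-- Conjugate transposition exchanges the two factors in `mem_pencilSpec_iff_det`.
lemma neg_conj_mem_pencilSpec (h : lam ∈ pencilSpec (pencilC A ε z₀) (pencilD m θ)) :
    -(starRingEnd ℂ lam) ∈ pencilSpec (pencilC A ε z₀) (pencilD m θ) := by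
  rw [mem_pencilSpec_iff_det] at h ⊢
  rw [← star_eq_zero, ← det_conjTranspose, ← h]
  simp [← Complex.exp_conj]

lemma I_mul_mem_pencilSpec_iff {r : ℝ} (hε : 0 ≤ ε) :
    I * r ∈ pencilSpec (pencilC A ε z₀) (pencilD m θ) ↔
      IsSingularValue (A - (z₀ + r * exp (θ * I)) • 1) ε := by
  have hr : -(I * (I * r)) = (r : ℂ) := by rw [← mul_assoc, I_mul_I, neg_one_mul, neg_neg]
  have hconj : star (z₀ + r * exp (θ * I)) = star z₀ + r * exp (-(θ * I)) := by
    simp [← Complex.exp_conj]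
  rw [mem_pencilSpec_iff_det, hr, IsSingularValue, and_iff_right hε, conjTranspose_sub,
    conjTranspose_sub, conjTranspose_smul, conjTranspose_smul, hconj, conjTranspose_one,
    add_smul, add_smul, sub_sub, sub_sub]

lemma pencilSpec_pencilC_pencilD_finite (A : Matrix (Fin m) (Fin m) ℂ) (ε : ℝ) (z₀ : ℂ) (θ : ℝ) :
    (pencilSpec (pencilC A ε z₀) (pencilD m θ)).Finite := by
  rw [pencilSpec_eq_spectrum (isUnit_det_pencilD m θ)]
  exact Matrix.finite_spectrum _

lemma exists_mem_pencilSpec_re_nonpos [NeZero m]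
    (A : Matrix (Fin m) (Fin m) ℂ) (ε : ℝ) (z₀ : ℂ) (θ : ℝ) :
    ∃ lam ∈ pencilSpec (pencilC A ε z₀) (pencilD m θ), lam.re ≤ 0 := by
  obtain ⟨lam, hlam⟩ : (pencilSpec (pencilC A ε z₀) (pencilD m θ)).Nonempty := by
    rw [pencilSpec_eq_spectrum (isUnit_det_pencilD m θ)]
    exact spectrum.nonempty_of_isAlgClosed_of_finiteDimensional ℂ _
  rcases le_total lam.re 0 with hre | hre
  · exact ⟨lam, hlam, hre⟩
  · exact ⟨_, neg_conj_mem_pencilSpec hlam, by simpa using hre⟩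

end Pencil

section AFun

variable {m : ℕ} {A : Matrix (Fin m) (Fin m) ℂ} {ε : ℝ} {z₀ : ℂ} {θ : ℝ}

lemma aFun_nonneg (A : Matrix (Fin m) (Fin m) ℂ) (ε : ℝ) (z₀ : ℂ) (θ : ℝ) :
    0 ≤ aFun A ε z₀ θ := by
  refine Real.sInf_nonneg ?_
  rintro _ ⟨lam, -, -, rfl⟩
  positivity

lemma aFun_of_dim_zero (A : Matrix (Fin 0) (Fin 0) ℂ) (ε : ℝ) (z₀ : ℂ) (θ : ℝ) :
    aFun A ε z₀ θ = 0 := by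
  simp [aFun, pencilSpec]

lemma aFun_le_sq_arg {lam : ℂ} (hlam : lam ∈ pencilSpec (pencilC A ε z₀) (pencilD m θ))
    (hre : lam.re ≤ 0) : aFun A ε z₀ θ ≤ arg (-I * lam) ^ 2 :=
  csInf_le ⟨0, by rintro _ ⟨_, -, -, rfl⟩; positivity⟩ ⟨lam, hlam, hre, rfl⟩

lemma exists_aFun_eq_sq_arg [NeZero m] (A : Matrix (Fin m) (Fin m) ℂ) (ε : ℝ) (z₀ : ℂ) (θ : ℝ) :
    ∃ lam ∈ pencilSpec (pencilC A ε z₀) (pencilD m θ),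
      lam.re ≤ 0 ∧ aFun A ε z₀ θ = arg (-I * lam) ^ 2 := by
  let S : Set ℝ := {x | ∃ lam ∈ pencilSpec (pencilC A ε z₀) (pencilD m θ),
    lam.re ≤ 0 ∧ x = arg (-I * lam) ^ 2}
  have hfin : S.Finite := by
    refine ((pencilSpec_pencilC_pencilD_finite A ε z₀ θ).image
      fun lam ↦ arg (-I * lam) ^ 2).subset ?_
    rintro _ ⟨lam, hlam, -, rfl⟩
    exact ⟨lam, hlam, rfl⟩
  obtain ⟨lam, hlam, hre⟩ := exists_mem_pencilSpec_re_nonpos A ε z₀ θ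
  have hne : S.Nonempty := ⟨_, lam, hlam, hre, rfl⟩
  exact hne.csInf_mem hfin

lemma arg_neg_I_mul_eq_zero_iff {lam : ℂ} :
    arg (-I * lam) = 0 ↔ ∃ r : ℝ, 0 ≤ r ∧ lam = I * r := by
  constructor
  · intro h
    obtain ⟨hre, him⟩ := arg_eq_zero_iff.1 h
    exact ⟨lam.im, by simpa using hre, Complex.ext (by simpa using him) (by simp)⟩
  · rintro ⟨r, hr, rfl⟩
    rw [← mul_assoc, neg_mul, I_mul_I, neg_neg, one_mul, arg_ofReal_of_nonneg hr]

lemma aFun_eq_zero_iff_exists_isSingularValue [NeZero m] (hε : 0 ≤ ε) :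
    aFun A ε z₀ θ = 0 ↔
      ∃ r : ℝ, 0 ≤ r ∧ IsSingularValue (A - (z₀ + r * exp (θ * I)) • 1) ε := by
  simp only [← I_mul_mem_pencilSpec_iff hε]
  constructor
  · intro h
    obtain ⟨lam, hlam, -, harg⟩ := exists_aFun_eq_sq_arg A ε z₀ θ
    rw [h, eq_comm, sq_eq_zero_iff, arg_neg_I_mul_eq_zero_iff] at harg
    obtain ⟨r, hr, rfl⟩ := harg
    exact ⟨r, hr, hlam⟩
  · rintro ⟨r, hr, hmem⟩
    refine le_antisymm ?_ (aFun_nonneg A ε z₀ θ)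
    have hle := aFun_le_sq_arg hmem (by simp)
    rwa [arg_neg_I_mul_eq_zero_iff.2 ⟨r, hr, rfl⟩, zero_pow two_ne_zero] at hle

theorem aFun_eq_zero_iff_nonempty_ray_inter_pspec (hε : 0 ≤ ε)
    (hA : ¬ IsSingularValue (A - z₀ • 1) ε) :
    aFun A ε z₀ θ = 0 ↔ (ray z₀ θ ∩ pspec ε A).Nonempty := by
  rcases eq_or_ne m 0 with rfl | hm
  · exact iff_of_true (aFun_of_dim_zero A ε z₀ θ)
      ⟨_, ⟨1, one_pos, rfl⟩, (sigmaMin_of_dim_zero _).trans_le hε⟩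
  have : NeZero m := ⟨hm⟩
  rw [aFun_eq_zero_iff_exists_isSingularValue hε]
  constructor
  · rintro ⟨r, hr, hsing⟩
    have hr0 : r ≠ 0 := by
      rintro rfl
      rw [ofReal_zero, zero_mul, add_zero] at hsing
      exact hA hsing
    exact ⟨_, ⟨r, hr.lt_of_ne' hr0, rfl⟩, sigmaMin_le_of_isSingularValue hsing⟩
  · rintro ⟨_, ⟨r₀, hr₀, rfl⟩, hle⟩
    obtain ⟨r, hr, hsing⟩ := exists_isSingularValue_of_sigmaMin_le A z₀ (exp_ne_zero _) hle
    exact ⟨r, hr₀.le.trans hr, hsing⟩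

end AFun

theorem stmt11_general {m n : ℕ} (A : Matrix (Fin m) (Fin m) ℂ) (B : Matrix (Fin n) (Fin n) ℂ)
    (ε : ℝ) (hε : 0 ≤ ε) (z₀ : ℂ)
    (hA : ¬ IsSingularValue (A - z₀ • 1) ε) (hB : ¬ IsSingularValue (B - z₀ • 1) ε) (θ : ℝ) :
    aFun A ε z₀ θ + aFun B ε z₀ θ = 0 ↔
      (ray z₀ θ ∩ pspec ε A).Nonempty ∧ (ray z₀ θ ∩ pspec ε B).Nonempty := by
  rw [add_eq_zero_iff_of_nonneg (aFun_nonneg A ε z₀ θ) (aFun_nonneg B ε z₀ θ),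
    aFun_eq_zero_iff_nonempty_ray_inter_pspec hε hA,
    aFun_eq_zero_iff_nonempty_ray_inter_pspec hε hB]

theorem stmt11 {m n : ℕ} (A : Matrix (Fin m) (Fin m) ℂ) (B : Matrix (Fin n) (Fin n) ℂ)
    (ε : ℝ) (hε : 0 ≤ ε) (z₀ : ℂ)
    (hA : ¬ IsSingularValue (A - z₀ • 1) ε) (hB : ¬ IsSingularValue (B - z₀ • 1) ε)
    (θ : ℝ) (hθ : θ ∈ Set.Ioc (-Real.pi) Real.pi) :
    ((ray z₀ θ ∩ pspec ε A ∩ pspec ε B).Nonempty →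
      aFun A ε z₀ θ + aFun B ε z₀ θ = 0) ∧
    (aFun A ε z₀ θ + aFun B ε z₀ θ = 0 →
      (ray z₀ θ ∩ pspec ε A).Nonempty ∧ (ray z₀ θ ∩ pspec ε B).Nonempty) :=
  have h := stmt11_general A B ε hε z₀ hA hB θ
  ⟨fun ⟨z, ⟨hz, hzA⟩, hzB⟩ ↦ h.2 ⟨⟨z, hz, hzA⟩, ⟨z, hz, hzB⟩⟩, h.1⟩
end
end
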